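/- arXiv:1301.4937 — 4 statements merged into one kernel-verified Lean document; each statement's English description precedes it below -/
import Mathlib

section
/- Let m ≥ 1 and 1 ≤ j ≤ m, and define integers b_1,…,b_m by b_j = 0 and b_i = 1 for all i ≠ j. Then every coefficient of the Euler continuant polynomial D_m(b_1,…,b_m) is greater than or equal to the corresponding coefficient of the Fibonacci polynomial f_{m−1}; in particular, the coefficient of z^{m−2k} in D_m(b_1,…,b_m) is at least C(m−1−k, k−1) for every 1 ≤ k ≤ ⌊m/2⌋. -/
open Polynomial

/-- The Fibonacci polynomials: `f 0 = 0`, `f 1 = 1`, `f (n+2) = X * f (n+1) + f n`. -/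
noncomputable def fibP : ℕ → Polynomial ℤ
  | 0 => 0
  | 1 => 1
  | n + 2 => X * fibP (n + 1) + fibP n

/-- The extended Euler continuant polynomials: `D b 0 = 1`, `D b 1 = b₁ z`,
`D b k = bₖ z ⬝ D b (k-1) + D b (k-2)` (with the convention `D b (-1) = 0`). -/
noncomputable def contD (b : ℕ → ℤ) : ℕ → Polynomial ℤ
  | 0 => 1
  | 1 => C (b 1) * X
  | k + 2 => C (b (k + 2)) * X * contD b (k + 1) + contD b k

theorem fibP_nonneg_aux (N : ℕ) :
    (∀ n, 0 ≤ (fibP N).coeff n) ∧ (∀ n, 0 ≤ (fibP (N + 1)).coeff n) := by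
  induction N with
  | zero =>
    refine ⟨fun n => by simp [fibP], fun n => ?_⟩
    simp only [fibP, coeff_one]
    split_ifs <;> simp
  | succ N ih =>
    refine ⟨ih.2, fun n => ?_⟩
    rw [show N + 1 + 1 = N + 2 from rfl, fibP]
    cases n with
    | zero => simpa using ih.1 0
    | succ n =>
      rw [coeff_add, coeff_X_mul]
      exact add_nonneg (ih.2 n) (ih.1 _)

theorem fibP_coeff_zero_aux (N : ℕ) :
    (∀ n, N ≤ n → (fibP N).coeff n = 0) ∧
    (∀ n, N + 1 ≤ n → (fibP (N + 1)).coeff n = 0) := by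
  induction N with
  | zero =>
    refine ⟨fun n _ => by simp [fibP], fun n hn => ?_⟩
    simp only [fibP, coeff_one]
    rw [if_neg (by omega)]
  | succ N ih =>
    refine ⟨ih.2, fun n hn => ?_⟩
    rw [show N + 1 + 1 = N + 2 from rfl, fibP]
    cases n with
    | zero => omega
    | succ n =>
      rw [coeff_add, coeff_X_mul, ih.2 n (by omega), ih.1 _ (by omega), add_zero]

theorem fibP_coeff_choose (n i : ℕ) :
    (fibP (n + 2 * i + 1)).coeff n = ((n + i).choose i : ℤ) := by
  induction n generalizing i with
  | zero =>
    induction i with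
    | zero => simp [fibP]
    | succ i ih =>
      rw [show 0 + 2 * (i + 1) + 1 = (0 + 2 * i + 1) + 2 by ring, fibP, coeff_add, ih]
      simp
  | succ n ihn =>
    induction i with
    | zero =>
      have h := ihn 0
      simp only [mul_zero, add_zero, Nat.choose_zero_right] at h ⊢
      rw [show n + 1 + 1 = n + 2 from rfl, fibP, coeff_add, coeff_X_mul, h,
        (fibP_coeff_zero_aux n).1 _ (by omega), add_zero]
    | succ i ih =>
      have h := ihn (i + 1)
      rw [show n + 1 + 2 * (i + 1) + 1 = (n + 1 + 2 * i + 1) + 2 by ring, fibP, coeff_add,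
        coeff_X_mul, ih, show n + 1 + 2 * i + 1 + 1 = n + 2 * (i + 1) + 1 by ring, h,
        show n + 1 + (i + 1) = (n + 1 + i) + 1 by ring, Nat.choose_succ_succ,
        show n + (i + 1) = n + 1 + i by ring]
      push_cast
      ring

theorem contD_lt_aux (j : ℕ) (b : ℕ → ℤ) (hb : ∀ i, b i = if i = j then 0 else 1) (k : ℕ) :
    (k < j → contD b k = fibP (k + 1)) ∧ (k + 1 < j → contD b (k + 1) = fibP (k + 2)) := by
  induction k with
  | zero =>
    refine ⟨fun _ => by simp [contD, fibP], fun h => ?_⟩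
    simp only [zero_add, contD, fibP]
    rw [hb, if_neg (by omega)]
    simp
  | succ k ih =>
    refine ⟨ih.2, fun h => ?_⟩
    rw [show k + 1 + 1 = k + 2 from rfl, contD, hb, if_neg (by omega), ih.2 (by omega),
      ih.1 (by omega), C_1, one_mul]
    exact (fibP.eq_3 (k + 1)).symm

theorem contD_at_aux (j : ℕ) (b : ℕ → ℤ) (hb : ∀ i, b i = if i = j + 1 then 0 else 1) :
    contD b (j + 1) = fibP j := by
  cases j with
  | zero => simp [contD, fibP, hb]
  | succ j =>
    rw [show j + 1 + 1 = j + 2 from rfl, contD, hb, if_pos rfl,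
      (contD_lt_aux _ b hb j).1 (by omega)]
    simp

theorem contD_ge_aux (j : ℕ) (b : ℕ → ℤ) (hb : ∀ i, b i = if i = j + 1 then 0 else 1) (d : ℕ) :
    (∀ n, (fibP (j + d)).coeff n ≤ (contD b (j + d + 1)).coeff n) ∧
    (∀ n, (fibP (j + d + 1)).coeff n ≤ (contD b (j + d + 2)).coeff n) := by
  induction d with
  | zero =>
    rw [add_zero]
    refine ⟨fun n => by rw [contD_at_aux j b hb], fun n => ?_⟩
    rw [contD, hb, if_neg (by omega), contD_at_aux j b hb,
      (contD_lt_aux _ b hb j).1 (by omega), C_1, one_mul, coeff_add]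
    cases n with
    | zero => simp
    | succ n =>
      rw [coeff_X_mul]
      linarith [(fibP_nonneg_aux j).1 n]
  | succ d ih =>
    refine ⟨ih.2, fun n => ?_⟩
    rw [show j + (d + 1) + 2 = (j + d + 1) + 2 by ring,
      show j + (d + 1) + 1 = (j + d) + 2 by ring, fibP, contD, hb, if_neg (by omega), C_1,
      one_mul, coeff_add, coeff_add]
    cases n with
    | zero => simpa using ih.1 0
    | succ n =>
      rw [coeff_X_mul, coeff_X_mul]
      exact add_le_add (ih.2 n) (ih.1 _)

/-- If `bⱼ = 0` and `bᵢ = 1` for `i ≠ j` (with `1 ≤ j ≤ m`), then every coefficient of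
`D_m(b₁,…,b_m)` is at least the corresponding coefficient of `f_{m-1}`; in particular the
coefficient of `z^{m-2k}` is at least `C(m-1-k, k-1)` for `1 ≤ k ≤ ⌊m/2⌋`. -/
theorem contD_coeff_ge_fibP (m j : ℕ) (hm : 1 ≤ m) (hj1 : 1 ≤ j) (hj2 : j ≤ m)
    (b : ℕ → ℤ) (hb : ∀ i, b i = if i = j then 0 else 1) :
    (∀ n, (fibP (m - 1)).coeff n ≤ (contD b m).coeff n) ∧
    (∀ k, 1 ≤ k → k ≤ m / 2 →
      ((m - 1 - k).choose (k - 1) : ℤ) ≤ (contD b m).coeff (m - 2 * k)) := by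
  have key : ∀ n, (fibP (m - 1)).coeff n ≤ (contD b m).coeff n := by
    obtain ⟨j, rfl⟩ : ∃ i, j = i + 1 := ⟨j - 1, by omega⟩
    obtain ⟨d, rfl⟩ : ∃ d, m = j + d + 1 := ⟨m - j - 1, by omega⟩
    exact (contD_ge_aux j b hb d).1
  refine ⟨key, fun k hk1 hk2 => ?_⟩
  refine le_trans (le_of_eq ?_) (key _)
  obtain ⟨i, rfl⟩ : ∃ i, k = i + 1 := ⟨k - 1, by omega⟩
  obtain ⟨n, rfl⟩ : ∃ n, m = n + 2 * (i + 1) := ⟨m - 2 * (i + 1), by omega⟩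
  rw [show n + 2 * (i + 1) - 2 * (i + 1) = n by omega,
    show n + 2 * (i + 1) - 1 - (i + 1) = n + i by omega,
    show n + 2 * (i + 1) - 1 = n + 2 * i + 1 by omega, fibP_coeff_choose]
  simp
end

section
/- For every m ≥ 0 and all integers b_1,…,b_m, there exists an integer d ≥ 0 such that D_m(b_1,…,b_m) ≡ f_d (mod 2), i.e., every coefficient of the polynomial D_m(b_1,…,b_m) − f_d is even. (Since the Conway polynomial of any two-bridge link is such a continuant, every two-bridge Conway polynomial is congruent modulo 2 to a Fibonacci polynomial.) -/
open Polynomial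

/-- Reduction modulo 2 of a polynomial with integer coefficients. -/
noncomputable def redTwo (p : Polynomial ℤ) : Polynomial (ZMod 2) :=
  p.map (Int.castRingHom (ZMod 2))

theorem redTwo_fib (n : ℕ) :
    redTwo (fibP (n + 2)) = X * redTwo (fibP (n + 1)) + redTwo (fibP n) := by
  simp [redTwo, fibP]

theorem redTwo_cont (b : ℕ → ℤ) (k : ℕ) :
    (redTwo (contD b (k + 2)) = redTwo (contD b k)) ∨
    (redTwo (contD b (k + 2)) = X * redTwo (contD b (k + 1)) + redTwo (contD b k)) := by
  have h : Int.castRingHom (ZMod 2) (b (k + 2)) = 0 ∨ Int.castRingHom (ZMod 2) (b (k + 2)) = 1 := by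
    generalize Int.castRingHom (ZMod 2) (b (k + 2)) = x
    revert x
    decide
  rcases h with h | h
  · left
    simp only [redTwo, contD, Polynomial.map_add, Polynomial.map_mul, Polynomial.map_C,
      Polynomial.map_X, h, C_0, zero_mul, zero_add]
  · right
    simp only [redTwo, contD, Polynomial.map_add, Polynomial.map_mul, Polynomial.map_C,
      Polynomial.map_X, h, C_1, one_mul]

/-- Consecutive continuants are, modulo 2, consecutive Fibonacci polynomials in some order. -/
theorem redTwo_pair (b : ℕ → ℤ) (k : ℕ) : ∃ a : ℕ,
    (redTwo (contD b k) = redTwo (fibP a) ∧ redTwo (contD b (k + 1)) = redTwo (fibP (a + 1))) ∨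
    (redTwo (contD b k) = redTwo (fibP (a + 1)) ∧ redTwo (contD b (k + 1)) = redTwo (fibP a)) := by
  induction k with
  | zero =>
    have h : Int.castRingHom (ZMod 2) (b 1) = 0 ∨ Int.castRingHom (ZMod 2) (b 1) = 1 := by
      generalize Int.castRingHom (ZMod 2) (b 1) = x
      revert x
      decide
    rcases h with h | h
    · refine ⟨0, Or.inr ⟨by simp [contD, fibP], ?_⟩⟩
      simp only [redTwo, contD, fibP, Polynomial.map_mul, Polynomial.map_C, h,
        C_0, zero_mul, Polynomial.map_zero]
    · refine ⟨1, Or.inl ⟨by simp [contD, fibP], ?_⟩⟩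
      simp only [redTwo, contD, fibP, Polynomial.map_mul, Polynomial.map_C, h,
        C_1, one_mul, Polynomial.map_X, mul_one, add_zero]
  | succ k ih =>
    obtain ⟨a, ⟨h1, h2⟩ | ⟨h1, h2⟩⟩ := ih
    · rcases redTwo_cont b k with h | h
      · exact ⟨a, Or.inr ⟨h2, h.trans h1⟩⟩
      · exact ⟨a + 1, Or.inl ⟨h2, by rw [h, h1, h2, redTwo_fib]⟩⟩
    · rcases redTwo_cont b k with h | h
      · exact ⟨a, Or.inl ⟨h2, h.trans h1⟩⟩
      · rcases a with _ | a
        · refine ⟨0, Or.inl ⟨h2, ?_⟩⟩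
          rw [h, h1, h2]
          simp [redTwo, fibP]
        · refine ⟨a, Or.inr ⟨h2, ?_⟩⟩
          rw [h, h1, h2, redTwo_fib, ← add_assoc, CharTwo.add_self_eq_zero, zero_add]

/-- Every Euler continuant polynomial (thus, every Conway polynomial of a two-bridge link)
is congruent modulo 2 to some Fibonacci polynomial. -/
theorem contD_congr_fibP_mod_two (m : ℕ) (b : ℕ → ℤ) :
    ∃ d : ℕ, ∀ n, 2 ∣ (contD b m - fibP d).coeff n := by
  obtain ⟨a, h⟩ := redTwo_pair b m
  have key : ∃ d, redTwo (contD b m) = redTwo (fibP d) := by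
    rcases h with h | h
    · exact ⟨_, h.1⟩
    · exact ⟨_, h.1⟩
  obtain ⟨d, hd⟩ := key
  refine ⟨d, fun n => ?_⟩
  have hn := congrArg (fun p => p.coeff n) hd
  simp only [redTwo, coeff_map, eq_intCast] at hn
  rw [coeff_sub]
  have := (ZMod.intCast_zmod_eq_zero_iff_dvd ((contD b m).coeff n - (fibP d).coeff n) 2).1
    (by push_cast; rw [hn, sub_self])
  exact_mod_cast this
end

section
/- Let b_1,…,b_m be integers and define sequences of integers e_i and d_i for 0 ≤ i ≤ m by e_0 = 1, d_0 = 1, e_{i+1} = −(−1)^{b_{i+1}}·e_i (that is, e_{i+1} = e_i if b_{i+1} is odd and e_{i+1} = −e_i if b_{i+1} is even), and d_{i+1} = d_i + e_{i+1}. Then D_m(b_1,…,b_m) ≡ f_{|d_m|} (mod 2), i.e., every coefficient of D_m(b_1,…,b_m) − f_{|d_m|} is even. -/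
open Polynomial

/-- Fibonacci polynomials mod 2, indexed by the integers. -/
noncomputable def fibZ (k : ℤ) : Polynomial (ZMod 2) :=
  (fibP k.natAbs).map (Int.castRingHom (ZMod 2))

theorem fibZ_neg (k : ℤ) : fibZ (-k) = fibZ k := by
  simp [fibZ]

theorem fibZ_nat (n : ℕ) : fibZ ((n : ℤ) + 2) = X * fibZ ((n : ℤ) + 1) + fibZ n := by
  have h2 : ((n : ℤ) + 2).natAbs = n + 2 := by omega
  have h1 : ((n : ℤ) + 1).natAbs = n + 1 := by omega
  have h0 : (n : ℤ).natAbs = n := by omega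
  simp only [fibZ, h2, h1, h0]
  rw [fibP]
  simp

theorem fibZ_rec (k : ℤ) : fibZ (k + 1) = X * fibZ k + fibZ (k - 1) := by
  rcases lt_trichotomy k 0 with h | h | h
  · obtain ⟨n, hn⟩ : ∃ n : ℕ, k = -((n : ℤ) + 1) := ⟨(-k - 1).toNat, by omega⟩
    have e1 : k + 1 = -(n : ℤ) := by omega
    have e2 : k - 1 = -((n : ℤ) + 2) := by omega
    rw [e1, e2, hn, fibZ_neg, fibZ_neg, fibZ_neg, fibZ_nat, ← add_assoc,
      CharTwo.add_self_eq_zero, zero_add]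
  · subst h
    simp [fibZ, fibP]
  · obtain ⟨n, hn⟩ : ∃ n : ℕ, k = (n : ℤ) + 1 := ⟨(k - 1).toNat, by omega⟩
    have e1 : k + 1 = (n : ℤ) + 2 := by omega
    have e2 : k - 1 = (n : ℤ) := by omega
    rw [e1, e2, hn, fibZ_nat]

theorem fibZ_rec_sign (k e : ℤ) (he : e = 1 ∨ e = -1) :
    fibZ (k + e) = X * fibZ k + fibZ (k - e) := by
  rcases he with rfl | rfl
  · exact fibZ_rec k
  · have h := fibZ_rec k
    rw [sub_neg_eq_add, h, ← add_assoc, CharTwo.add_self_eq_zero, zero_add, sub_eq_add_neg]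

/-- Algorithm determining the index `d` with `D_m(b₁,…,b_m) ≡ f_d (mod 2)`:
with `e₀ = d₀ = 1`, `e_{i+1} = -(-1)^{b_{i+1}} e_i` (i.e. `e_{i+1} = e_i` if `b_{i+1}` is odd
and `e_{i+1} = -e_i` otherwise) and `d_{i+1} = d_i + e_{i+1}`, one has
`D_m(b₁,…,b_m) ≡ f_{|d_m|} (mod 2)`. -/
theorem contD_congr_fibP_algorithm (m : ℕ) (b : ℕ → ℤ) (e d : ℕ → ℤ)
    (he0 : e 0 = 1) (hd0 : d 0 = 1)
    (he : ∀ i, e (i + 1) = if Odd (b (i + 1)) then e i else -e i)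
    (hd : ∀ i, d (i + 1) = d i + e (i + 1)) :
    ∀ n, 2 ∣ (contD b m - fibP (d m).natAbs).coeff n := by
  have hsign : ∀ i, e i = 1 ∨ e i = -1 := by
    intro i
    induction i with
    | zero => exact Or.inl he0
    | succ i ih =>
      rw [he i]
      split_ifs <;> omega
  have hodd : ∀ i, Odd (b i) → ((b i : ℤ) : ZMod 2) = 1 := fun i h =>
    (ZMod.intCast_eq_one_iff_odd).2 h
  have heven : ∀ i, ¬ Odd (b i) → ((b i : ℤ) : ZMod 2) = 0 := fun i h =>
    (ZMod.intCast_eq_zero_iff_even).2 (Int.not_odd_iff_even.1 h)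
  have key : ∀ k, (contD b k).map (Int.castRingHom (ZMod 2)) = fibZ (d k) ∧
      (contD b (k + 1)).map (Int.castRingHom (ZMod 2)) = fibZ (d (k + 1)) := by
    intro k
    induction k with
    | zero =>
      refine ⟨by simp [contD, fibZ, hd0, fibP], ?_⟩
      rw [hd 0, he 0, hd0, he0]
      by_cases h : Odd (b (0 + 1))
      · rw [if_pos h, contD, Polynomial.map_mul, Polynomial.map_C, Polynomial.map_X, eq_intCast,
          hodd 1 h, C_1, one_mul]
        simp [fibZ, fibP]
      · rw [if_neg h, contD, Polynomial.map_mul, Polynomial.map_C, Polynomial.map_X, eq_intCast,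
          heven 1 h, C_0, zero_mul]
        simp [fibZ, fibP]
    | succ k ih =>
      obtain ⟨h0, h1⟩ := ih
      refine ⟨h1, ?_⟩
      have hdk : d k = d (k + 1) - e (k + 1) := by rw [hd k]; ring
      rw [contD, Polynomial.map_add, Polynomial.map_mul, Polynomial.map_mul, h0, h1,
        Polynomial.map_C, Polynomial.map_X, eq_intCast, hd (k + 1), he (k + 1), hdk]
      by_cases h : Odd (b (k + 1 + 1))
      · rw [if_pos h, fibZ_rec_sign _ _ (hsign (k + 1)), hodd (k + 2) h, C_1, one_mul]
      · rw [if_neg h, heven (k + 2) h, C_0, zero_mul, zero_mul, zero_add, sub_eq_add_neg]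
  intro n
  have h := congrArg (fun p => p.coeff n) (key m).1
  simp only [fibZ, coeff_map, eq_intCast] at h
  rw [coeff_sub]
  have := (ZMod.intCast_zmod_eq_zero_iff_dvd
    ((contD b m).coeff n - (fibP (d m).natAbs).coeff n) 2).1
    (by rw [Int.cast_sub, h, sub_self])
  exact_mod_cast this
end

section
/- Let m ≥ 1, let b_1,…,b_m be nonzero integers, let z ∈ ℂ be a root of the Euler continuant polynomial D_m(b_1,…,b_m), and let α ∈ ℂ satisfy α² − (z² + 2)α + 1 = 0 (equivalently, α is a root of the associated Alexander polynomial of the two-bridge link). Then −3/2 < Re(α) < 3 + 2√2; moreover, if α is real, then 3 − 2√2 < α < 3 + 2√2. (This gives a partial answer to Hoste's conjecture on roots of Alexander polynomials of alternating knots.) -/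
open Polynomial

/-- If `2 ≤ ‖z‖`, the absolute values of the continuants do not decrease. -/
lemma contD_norm_mono (m : ℕ) (b : ℕ → ℤ) (hb : ∀ i, 1 ≤ i → i ≤ m → b i ≠ 0)
    (z : ℂ) (hz : 2 ≤ ‖z‖) (k : ℕ) (hk : k + 1 ≤ m) :
    0 < ‖Polynomial.aeval z (contD b k)‖ ∧
    ‖Polynomial.aeval z (contD b k)‖ ≤ ‖Polynomial.aeval z (contD b (k + 1))‖ := by
  have key : ∀ i, 1 ≤ i → i ≤ m → 2 ≤ ‖((b i : ℤ) : ℂ) * z‖ := by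
    intro i h1 h2
    have h3 : (1 : ℝ) ≤ ‖((b i : ℤ) : ℂ)‖ := by
      rw [Complex.norm_intCast]
      exact_mod_cast Int.one_le_abs (hb i h1 h2)
    rw [norm_mul]
    nlinarith
  induction k with
  | zero =>
    have := key 1 le_rfl hk
    simp only [contD, map_one, norm_one, map_mul, aeval_X, zero_add]
    simp only [eq_intCast, map_intCast]
    exact ⟨one_pos, by linarith⟩
  | succ k ih =>
    obtain ⟨h0, h1⟩ := ih (by omega)
    have h2 := key (k + 2) (by omega) hk
    refine ⟨by linarith, ?_⟩
    have e : Polynomial.aeval z (contD b (k + 1 + 1)) =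
        ((b (k + 2) : ℤ) : ℂ) * z * Polynomial.aeval z (contD b (k + 1))
          + Polynomial.aeval z (contD b k) := by
      simp [contD]
    rw [e]
    have h3 := norm_sub_le_norm_add (((b (k + 2) : ℤ) : ℂ) * z * Polynomial.aeval z (contD b (k + 1)))
      (Polynomial.aeval z (contD b k))
    rw [norm_mul] at h3
    nlinarith

/-- Bounds for the roots of Alexander polynomials of two-bridge links: if `z` is a root of
the Euler continuant polynomial `D_m(b₁,…,b_m)` (with `b_i ≠ 0`) and `α` satisfies
`α² - (z² + 2)α + 1 = 0`, then `-3/2 < Re α < 3 + 2√2`; if moreover `α` is real, then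
`3 - 2√2 < α < 3 + 2√2`. -/
theorem alexander_root_bounds (m : ℕ) (hm : 1 ≤ m) (b : ℕ → ℤ)
    (hb : ∀ i, 1 ≤ i → i ≤ m → b i ≠ 0)
    (z : ℂ) (hz : Polynomial.aeval z (contD b m) = 0)
    (α : ℂ) (hα : α ^ 2 - (z ^ 2 + 2) * α + 1 = 0) :
    (-3 / 2 < α.re ∧ α.re < 3 + 2 * Real.sqrt 2) ∧
    (α.im = 0 → 3 - 2 * Real.sqrt 2 < α.re ∧ α.re < 3 + 2 * Real.sqrt 2) := by
  have hz2 : ‖z‖ < 2 := by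
    by_contra h
    push Not at h
    obtain ⟨k, rfl⟩ : ∃ k, m = k + 1 := ⟨m - 1, by omega⟩
    have := contD_norm_mono (k + 1) b hb z h k le_rfl
    rw [hz, norm_zero] at this
    linarith [this.1, this.2]
  have hα0 : α ≠ 0 := by
    rintro rfl
    simp at hα
  have hρ : 0 < ‖α‖ := norm_pos_iff.mpr hα0
  have h1 : (α - 1) ^ 2 = z ^ 2 * α := by linear_combination hα
  have h2 : ‖α - 1‖ ^ 2 = ‖z‖ ^ 2 * ‖α‖ := by
    rw [← norm_pow, h1, norm_mul, norm_pow]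
  have hz4 : ‖z‖ ^ 2 < 4 := by nlinarith [norm_nonneg z]
  have h3 : ‖α - 1‖ ^ 2 < 4 * ‖α‖ := by
    rw [h2]
    exact mul_lt_mul_of_pos_right hz4 hρ
  have h4 : ‖α‖ ^ 2 = α.re ^ 2 + α.im ^ 2 := by
    rw [Complex.sq_norm, Complex.normSq_apply]; ring
  have h5 : ‖α - 1‖ ^ 2 = ‖α‖ ^ 2 - 2 * α.re + 1 := by
    rw [h4, Complex.sq_norm, Complex.normSq_apply]
    simp only [Complex.sub_re, Complex.sub_im, Complex.one_re, Complex.one_im]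
    ring
  rw [h5] at h3
  have hre : α.re ≤ ‖α‖ := Complex.re_le_norm α
  have hs : Real.sqrt 2 ^ 2 = 2 := Real.sq_sqrt (by norm_num)
  have hs0 : 0 ≤ Real.sqrt 2 := Real.sqrt_nonneg 2
  have h6 : (‖α‖ - 3) ^ 2 < (2 * Real.sqrt 2) ^ 2 := by nlinarith
  obtain ⟨h7, h8⟩ := abs_lt_of_sq_lt_sq' h6 (by positivity)
  refine ⟨⟨?_, by linarith⟩, fun him => ⟨?_, by linarith⟩⟩
  · nlinarith [sq_nonneg (‖α‖ - 2)]
  · rw [him] at h4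
    have h9 : ‖α‖ = α.re := by
      rcases sq_eq_sq_iff_eq_or_eq_neg.mp (show ‖α‖ ^ 2 = α.re ^ 2 by linarith) with h | h
      · exact h
      · nlinarith [sq_nonneg (‖α‖ - 1)]
    linarith
end
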